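/- Let n ≥ 1 and let a ∈ ℝ^{n+1} with |a| > 1. Then for every x ∈ S^n, τ_a x = φ_{a*}( R_a ( φ_{a*} x ) ), where τ_a x = ((|a|² − 1) x + 2(1 − x·a) a)/|x − a|². (For x ∈ S^n one automatically has x·a* ≠ 1 and (R_a φ_{a*} x)·a* ≠ 1, so all maps are defined.) -/

import Mathlib

open MeasureTheory Metric Matrix
open scoped InnerProductSpace ENNReal

/-- `Euc m` is the Euclidean space `ℝ^m`. -/
abbrev Euc (m : ℕ) : Type := EuclideanSpace ℝ (Fin m)

/-- The Möbius transformation `φ_b x = (b − P_b x − s_b Q_b x)/(1 − x·b)`,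
where `P_b x = ((b·x)/|b|²) b`, `Q_b x = x − P_b x`, `s_b = √(1 − |b|²)`. -/
noncomputable def phiMap {n : ℕ} (b x : Euc (n + 1)) : Euc (n + 1) :=
  (1 - ⟪x, b⟫_ℝ)⁻¹ •
    (b - (⟪b, x⟫_ℝ / ‖b‖ ^ 2) • b -
      Real.sqrt (1 - ‖b‖ ^ 2) • (x - (⟪b, x⟫_ℝ / ‖b‖ ^ 2) • b))

/-- `a* = a/|a|²`, the inversion of `a` in the unit sphere. -/
noncomputable def aStar {n : ℕ} (a : Euc (n + 1)) : Euc (n + 1) := (‖a‖ ^ 2)⁻¹ • a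

/-- `s_{a*} = √(1 − |a*|²)`. -/
noncomputable def sStar {n : ℕ} (a : Euc (n + 1)) : ℝ := Real.sqrt (1 - ‖aStar a‖ ^ 2)

/-- The reflection `R_a x = x − 2((x·a)/|a|²) a` in the hyperplane `a^⊥`. -/
noncomputable def reflMap {n : ℕ} (a x : Euc (n + 1)) : Euc (n + 1) :=
  x - ((2 * ⟪x, a⟫_ℝ) / ‖a‖ ^ 2) • a

/-- `τ_a x = ((|a|² − 1) x + 2(1 − x·a) a)/|x − a|²`, the second point at which the
line through `a` and `x` meets the unit sphere. -/
noncomputable def tauMap {n : ℕ} (a x : Euc (n + 1)) : Euc (n + 1) :=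
  (‖x - a‖ ^ 2)⁻¹ • ((‖a‖ ^ 2 - 1) • x + (2 * (1 - ⟪x, a⟫_ℝ)) • a)

/-!
Put `b = a*` and `β = |b|²`, and write `x = c b + q` with `q ⊥ b`. In these coordinates
`φ_b` sends `c b + q` to `((1 - c) b - s_b q) / (1 - c β)`, while `R_a = R_b` only changes the
sign of `c`. Composing the three maps, `s_b` enters only through `s_b² = 1 - β`, and
`φ_b (R_b (φ_b x)) = ((1 - β) x + 2 (1 - c) b) / (1 + β - 2 c β)`. On the unit sphere the
denominator is `|x - b|²`, nonzero since `|b| < 1`, and multiplying numerator and denominator by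
`|a|² = 1 / β` gives `τ_a x`.
-/

section

variable {E : Type*} [NormedAddCommGroup E] [InnerProductSpace ℝ E] {b q x : E}

theorem exists_eq_smul_add_inner_eq_zero (b x : E) :
    ∃ (c : ℝ) (q : E), ⟪q, b⟫_ℝ = 0 ∧ x = c • b + q := by
  obtain ⟨y, hy, q, hq, hx⟩ := (ℝ ∙ b).exists_add_mem_mem_orthogonal x
  obtain ⟨c, rfl⟩ := Submodule.mem_span_singleton.1 hy
  exact ⟨c, q, Submodule.mem_orthogonal_singleton_iff_inner_left.1 hq, hx⟩

theorem inner_smul_add_of_inner_eq_zero (hq : ⟪q, b⟫_ℝ = 0) (c : ℝ) :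
    ⟪c • b + q, b⟫_ℝ = c * ‖b‖ ^ 2 := by
  rw [inner_add_left, real_inner_smul_left, real_inner_self_eq_norm_sq, hq, add_zero]

theorem norm_sub_sq_of_norm_eq_one (hx : ‖x‖ = 1) (b : E) :
    ‖x - b‖ ^ 2 = 1 + ‖b‖ ^ 2 - 2 * ⟪x, b⟫_ℝ := by
  rw [norm_sub_sq_real, hx]
  ring

end

section

variable {n : ℕ} {a b q x : Euc (n + 1)}

theorem phiMap_smul_add (hb : b ≠ 0) (hq : ⟪q, b⟫_ℝ = 0) (c : ℝ) :
    phiMap b (c • b + q) =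
      (1 - c * ‖b‖ ^ 2)⁻¹ • ((1 - c) • b - √(1 - ‖b‖ ^ 2) • q) := by
  rw [phiMap, real_inner_comm _ b, inner_smul_add_of_inner_eq_zero hq,
    mul_div_cancel_right₀ _ (by positivity)]
  module

theorem reflMap_eq_reflection (a x : Euc (n + 1)) :
    reflMap a x = (ℝ ∙ a)ᗮ.reflection x := by
  rw [reflMap, Submodule.reflection_orthogonal_apply, Submodule.reflection_singleton_apply,
    real_inner_comm]
  simp only [RCLike.ofReal_real_eq_id, id_eq]
  module

theorem reflMap_aStar (a : Euc (n + 1)) : reflMap (aStar a) = reflMap a := by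
  rcases eq_or_ne a 0 with rfl | ha
  · rw [aStar, smul_zero]
  · have hspan : (ℝ ∙ aStar a) = ℝ ∙ a :=
      Submodule.span_singleton_smul_eq (IsUnit.mk0 _ (by positivity)) a
    ext1 x
    simp only [reflMap_eq_reflection, hspan]

theorem reflMap_smul_add (hq : ⟪q, b⟫_ℝ = 0) (c : ℝ) :
    reflMap b (c • b + q) = (-c) • b + q := by
  have hmem : q ∈ (ℝ ∙ b)ᗮ := Submodule.mem_orthogonal_singleton_iff_inner_left.2 hq
  rw [reflMap_eq_reflection, map_add, map_smul,
    Submodule.reflection_orthogonalComplement_singleton_eq_neg,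
    Submodule.reflection_mem_subspace_eq_self hmem, smul_neg, neg_smul]

theorem reflMap_phiMap_smul_add (hb : b ≠ 0) (hq : ⟪q, b⟫_ℝ = 0) (c : ℝ) :
    reflMap b (phiMap b (c • b + q)) =
      (-((1 - c) / (1 - c * ‖b‖ ^ 2))) • b +
        (-(√(1 - ‖b‖ ^ 2) / (1 - c * ‖b‖ ^ 2))) • q := by
  have hφ : phiMap b (c • b + q) =
      ((1 - c) / (1 - c * ‖b‖ ^ 2)) • b + (-(√(1 - ‖b‖ ^ 2) / (1 - c * ‖b‖ ^ 2))) • q := by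
    rw [phiMap_smul_add hb hq]
    module
  rw [hφ, reflMap_smul_add (by rw [real_inner_smul_left, hq, mul_zero])]

theorem one_sub_inner_reflMap_phiMap (hb : b ≠ 0) (hx : ⟪x, b⟫_ℝ ≠ 1) :
    1 - ⟪reflMap b (phiMap b x), b⟫_ℝ =
      (1 + ‖b‖ ^ 2 - 2 * ⟪x, b⟫_ℝ) / (1 - ⟪x, b⟫_ℝ) := by
  obtain ⟨c, q, hq, rfl⟩ := exists_eq_smul_add_inner_eq_zero b x
  rw [inner_smul_add_of_inner_eq_zero hq] at hx ⊢
  have hd : 1 - c * ‖b‖ ^ 2 ≠ 0 := sub_ne_zero.2 hx.symm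
  rw [reflMap_phiMap_smul_add hb hq,
    inner_smul_add_of_inner_eq_zero (by rw [real_inner_smul_left, hq, mul_zero])]
  field_simp
  ring

theorem phiMap_reflMap_phiMap (hb : b ≠ 0) (hb₁ : ‖b‖ ≤ 1) (hx : ⟪x, b⟫_ℝ ≠ 1) :
    phiMap b (reflMap b (phiMap b x)) =
      (1 + ‖b‖ ^ 2 - 2 * ⟪x, b⟫_ℝ)⁻¹ •
        ((1 - ‖b‖ ^ 2) • x + (2 * (1 - ⟪x, b⟫_ℝ / ‖b‖ ^ 2)) • b) := by
  have hD := one_sub_inner_reflMap_phiMap hb hx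
  obtain ⟨c, q, hq, rfl⟩ := exists_eq_smul_add_inner_eq_zero b x
  rw [inner_smul_add_of_inner_eq_zero hq] at hx hD ⊢
  have hd : 1 - c * ‖b‖ ^ 2 ≠ 0 := sub_ne_zero.2 hx.symm
  have hs : √(1 - ‖b‖ ^ 2) ^ 2 = 1 - ‖b‖ ^ 2 :=
    Real.sq_sqrt (sub_nonneg.2 (pow_le_one₀ (norm_nonneg b) hb₁))
  have hrq (r : ℝ) : ⟪r • q, b⟫_ℝ = 0 := by rw [real_inner_smul_left, hq, mul_zero]
  rw [reflMap_phiMap_smul_add hb hq, inner_smul_add_of_inner_eq_zero (hrq _)] at hD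
  rw [reflMap_phiMap_smul_add hb hq, phiMap_smul_add hb (hrq _), hD, inv_div, div_eq_inv_mul,
    mul_smul, mul_div_cancel_right₀ _ (by positivity)]
  congr 1
  match_scalars
  · field_simp
    ring
  · field_simp
    exact hs

theorem norm_aStar (a : Euc (n + 1)) : ‖aStar a‖ = ‖a‖⁻¹ := by
  rcases eq_or_ne a 0 with rfl | ha
  · simp [aStar]
  · rw [aStar, norm_smul, norm_inv, norm_pow, norm_norm]
    field_simp

theorem inner_aStar (a x : Euc (n + 1)) : ⟪x, aStar a⟫_ℝ = ⟪x, a⟫_ℝ / ‖a‖ ^ 2 := by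
  rw [aStar, real_inner_smul_right, inv_mul_eq_div]

theorem tauMap_eq_of_norm_eq_one (ha : a ≠ 0) (hx : ‖x‖ = 1) :
    tauMap a x =
      (‖x - aStar a‖ ^ 2)⁻¹ •
        ((1 - ‖aStar a‖ ^ 2) • x + (2 * (1 - ⟪x, aStar a⟫_ℝ / ‖aStar a‖ ^ 2)) • aStar a) := by
  have hdist : ‖x - aStar a‖ ^ 2 = ‖x - a‖ ^ 2 / ‖a‖ ^ 2 := by
    rw [norm_sub_sq_of_norm_eq_one hx, norm_sub_sq_of_norm_eq_one hx, inner_aStar, norm_aStar]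
    field_simp
    ring
  rw [tauMap, hdist, inner_aStar, norm_aStar, inv_div, div_eq_inv_mul,
    mul_smul (‖x - a‖ ^ 2)⁻¹, aStar]
  congr 1
  match_scalars <;> field_simp

end

/-- Lemma 4.2: for `|a| > 1` and `x ∈ S^n`,
`τ_a x = φ_{a*}(R_a(φ_{a*} x))`; moreover all the intermediate values are defined,
i.e. `x·a* ≠ 1` and `(R_a φ_{a*} x)·a* ≠ 1`. -/
theorem statement5 (n : ℕ) (hn : 1 ≤ n)
    (a : Euc (n + 1)) (ha : 1 < ‖a‖) :
    ∀ x ∈ sphere (0 : Euc (n + 1)) 1,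
      ⟪x, aStar a⟫_ℝ ≠ 1 ∧
      ⟪reflMap a (phiMap (aStar a) x), aStar a⟫_ℝ ≠ 1 ∧
      tauMap a x = phiMap (aStar a) (reflMap a (phiMap (aStar a) x)) := by
  intro x hx
  have hx₁ : ‖x‖ = 1 := mem_sphere_zero_iff_norm.1 hx
  have ha₀ : a ≠ 0 := norm_pos_iff.1 (one_pos.trans ha)
  have hb₁ : ‖aStar a‖ < 1 := norm_aStar a ▸ inv_lt_one_of_one_lt₀ ha
  have hb₀ : aStar a ≠ 0 := smul_ne_zero (by positivity) ha₀
  have hxb : ⟪x, aStar a⟫_ℝ < 1 :=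
    (real_inner_le_norm x (aStar a)).trans_lt (by rwa [hx₁, one_mul])
  have hxb₀ : x - aStar a ≠ 0 := sub_ne_zero.2 fun h => hb₁.ne (h ▸ hx₁)
  rw [← reflMap_aStar a]
  refine ⟨hxb.ne, fun h => ?_, ?_⟩
  · have hpos : 0 < 1 - ⟪reflMap (aStar a) (phiMap (aStar a) x), aStar a⟫_ℝ := by
      rw [one_sub_inner_reflMap_phiMap hb₀ hxb.ne, ← norm_sub_sq_of_norm_eq_one hx₁]
      exact div_pos (by positivity) (sub_pos.2 hxb)
    exact hpos.ne' (sub_eq_zero.2 h.symm)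
  · rw [phiMap_reflMap_phiMap hb₀ hb₁.le hxb.ne, tauMap_eq_of_norm_eq_one ha₀ hx₁,
      norm_sub_sq_of_norm_eq_one hx₁]
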